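/- There exists a 2-(24,4,1) packing with 42 blocks whose leave is a vertex-disjoint union of two cycles of length 12, covering all 24 points (leave type 12^2). -/

import Mathlib

/-!
Identify the points with `ℤ/24` and let the leave join `p` to `p + 2`: the even and the odd residues
then form its two 12-cycles. Translation by 6 preserves this graph. A computer search for a packing
invariant under it finds twelve base blocks: three of the form `{a, b, a + 12, b + 12}`, whose
orbits have length 2, and nine with orbits of length 4, so that there are `3 * 2 + 9 * 4 = 42`
blocks in all.
-/

/-- A 2-(24,4,1) packing: a collection of 4-element blocks on 24 points such that
every pair of distinct points lies in at most one block. -/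
def IsPacking (B : Finset (Finset (Fin 24))) : Prop :=
  (∀ b ∈ B, b.card = 4) ∧
  ∀ p q : Fin 24, p ≠ q → ∀ b₁ ∈ B, ∀ b₂ ∈ B,
    p ∈ b₁ → q ∈ b₁ → p ∈ b₂ → q ∈ b₂ → b₁ = b₂

/-- Adjacency in the leave of a packing: the pair of distinct points is covered by no block. -/
def LeaveAdj (B : Finset (Finset (Fin 24))) (p q : Fin 24) : Prop :=
  p ≠ q ∧ ∀ b ∈ B, ¬ (p ∈ b ∧ q ∈ b)

/-- The leave of the packing `B` is a vertex-disjoint union of cycles whose lengths are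
given by the list `L`, covering all 24 points. -/
def LeaveIsCycleType (B : Finset (Finset (Fin 24))) (L : List ℕ) : Prop :=
  ∃ f : (i : Fin L.length) → ZMod (L.get i) → Fin 24,
    Function.Bijective (fun x : Σ i : Fin L.length, ZMod (L.get i) => f x.1 x.2) ∧
    ∀ p q : Fin 24, LeaveAdj B p q ↔
      ∃ i k, (p = f i k ∧ q = f i (k + 1)) ∨ (q = f i k ∧ p = f i (k + 1))

theorem isPacking_of_card_inter_le_one {B : Finset (Finset (Fin 24))}
    (hcard : ∀ b ∈ B, b.card = 4)
    (hinter : ∀ b₁ ∈ B, ∀ b₂ ∈ B, b₁ ≠ b₂ → (b₁ ∩ b₂).card ≤ 1) : IsPacking B := by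
  refine ⟨hcard, fun p q hpq b₁ hb₁ b₂ hb₂ hp₁ hq₁ hp₂ hq₂ => ?_⟩
  by_contra hne
  exact hpq <| Finset.card_le_one.mp (hinter b₁ hb₁ b₂ hb₂ hne)
    p (Finset.mem_inter.mpr ⟨hp₁, hp₂⟩) q (Finset.mem_inter.mpr ⟨hq₁, hq₂⟩)

theorem leaveIsCycleType_of_succ {B : Finset (Finset (Fin 24))} {L : List ℕ}
    {succ : Fin 24 → Fin 24} (f : (i : Fin L.length) → ZMod (L.get i) → Fin 24)
    (hf : Function.Bijective fun x : Σ i : Fin L.length, ZMod (L.get i) => f x.1 x.2)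
    (hsucc : ∀ i k, f i (k + 1) = succ (f i k))
    (hleave : ∀ p q, LeaveAdj B p q ↔ q = succ p ∨ p = succ q) : LeaveIsCycleType B L := by
  refine ⟨f, hf, fun p q => (hleave p q).trans ⟨?_, ?_⟩⟩
  · rintro (rfl | rfl)
    · obtain ⟨⟨i, k⟩, rfl⟩ := hf.surjective p
      exact ⟨i, k, .inl ⟨rfl, (hsucc i k).symm⟩⟩
    · obtain ⟨⟨i, k⟩, rfl⟩ := hf.surjective q
      exact ⟨i, k, .inr ⟨rfl, (hsucc i k).symm⟩⟩
  · rintro ⟨i, k, ⟨rfl, rfl⟩ | ⟨rfl, rfl⟩⟩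
    · exact .inl (hsucc i k)
    · exact .inr (hsucc i k)

section Develop

open scoped Pointwise

variable {G ι : Type*} [AddGroup G] [DecidableEq G] [Fintype ι] {S : Finset G} {b : ι → Finset G}

/-- The development of a family of base blocks `b` under a finite set `S` of translations: the
collection of all translates `c + b i` with `c ∈ S`. -/
def develop (S : Finset G) (b : ι → Finset G) : Finset (Finset G) :=
  Finset.image₂ (fun c i => c +ᵥ b i) S Finset.univ

theorem mem_develop {x : Finset G} : x ∈ develop S b ↔ ∃ c ∈ S, ∃ i, c +ᵥ b i = x := by
  simp [develop]

theorem card_of_mem_develop {k : ℕ} (hb : ∀ i, (b i).card = k) {x : Finset G}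
    (hx : x ∈ develop S b) : x.card = k := by
  obtain ⟨c, -, i, rfl⟩ := mem_develop.mp hx
  rw [Finset.card_vadd_finset, hb i]

theorem card_inter_le_of_mem_develop {k : ℕ} (hS : ∀ c ∈ S, ∀ d ∈ S, -c + d ∈ S)
    (hb : ∀ c ∈ S, ∀ i j, b i ≠ c +ᵥ b j → (b i ∩ (c +ᵥ b j)).card ≤ k) {x y : Finset G}
    (hx : x ∈ develop S b) (hy : y ∈ develop S b) (hxy : x ≠ y) : (x ∩ y).card ≤ k := by
  obtain ⟨c, hc, i, rfl⟩ := mem_develop.mp hx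
  obtain ⟨d, hd, j, rfl⟩ := mem_develop.mp hy
  have hy_eq : d +ᵥ b j = c +ᵥ ((-c + d) +ᵥ b j) := by rw [vadd_vadd, add_neg_cancel_left]
  rw [hy_eq] at hxy ⊢
  rw [← Finset.vadd_finset_inter, Finset.card_vadd_finset]
  exact hb _ (hS c hc d hd) i j fun h => hxy (congrArg (c +ᵥ ·) h)

theorem exists_mem_develop_iff {p q : G} :
    (∃ x ∈ develop S b, p ∈ x ∧ q ∈ x) ↔ ∃ c ∈ S, ∃ i, -c + p ∈ b i ∧ -c + q ∈ b i := by
  simp [mem_develop, ← Finset.neg_vadd_mem_iff]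

end Develop

/-- The translations under which the packing is invariant: the multiples of 6 in `ℤ/24`. -/
def translations : Finset (Fin 24) := {0, 6, 12, 18}

/-- Representatives of the orbits of blocks under translation by 6. -/
def baseBlock : Fin 12 → Finset (Fin 24) :=
  ![{0, 9, 12, 21}, {1, 4, 13, 16}, {2, 5, 14, 17},
    {0, 6, 16, 20}, {0, 1, 15, 19}, {0, 5, 8, 13}, {0, 4, 7, 11}, {0, 3, 17, 23},
    {1, 2, 10, 11}, {2, 3, 8, 19}, {2, 9, 15, 16}, {4, 10, 15, 23}]

open scoped Pointwise in
theorem card_baseBlock_inter_vadd_le_one : ∀ c ∈ translations, ∀ i j,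
    baseBlock i ≠ c +ᵥ baseBlock j → (baseBlock i ∩ (c +ᵥ baseBlock j)).card ≤ 1 := by
  decide +kernel

theorem card_develop_baseBlock : (develop translations baseBlock).card = 42 := by
  decide +kernel

theorem isPacking_develop_baseBlock : IsPacking (develop translations baseBlock) :=
  isPacking_of_card_inter_le_one
    (fun _ => card_of_mem_develop (by decide))
    (fun _ h₁ _ h₂ => card_inter_le_of_mem_develop (by decide) card_baseBlock_inter_vadd_le_one
      h₁ h₂)

theorem ne_and_not_exists_translate_iff : ∀ p q : Fin 24,
    (p ≠ q ∧ ¬ ∃ c ∈ translations, ∃ i, -c + p ∈ baseBlock i ∧ -c + q ∈ baseBlock i) ↔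
      q = p + 2 ∨ p = q + 2 := by
  decide +kernel

theorem leaveAdj_develop_baseBlock (p q : Fin 24) :
    LeaveAdj (develop translations baseBlock) p q ↔ q = p + 2 ∨ p = q + 2 := by
  rw [← ne_and_not_exists_translate_iff, ← exists_mem_develop_iff, LeaveAdj]
  push Not
  rfl

/-- The `k`-th point of the `i`-th cycle of the leave: cycle `0` runs through the even points and
cycle `1` through the odd ones. -/
def cyclePoint (i : Fin [12, 12].length) (k : ZMod ([12, 12].get i)) : Fin 24 :=
  Fin.ofNat 24 (i + 2 * k.val)

instance neZero_cycleLength (i : Fin [12, 12].length) : NeZero ([12, 12].get i) :=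
  ⟨by revert i; decide⟩

theorem cyclePoint_bijective : Function.Bijective
    fun x : Σ i : Fin [12, 12].length, ZMod ([12, 12].get i) => cyclePoint x.1 x.2 := by
  decide +kernel

theorem cyclePoint_add_one : ∀ i k, cyclePoint i (k + 1) = cyclePoint i k + 2 := by
  decide +kernel

theorem leaveIsCycleType_develop_baseBlock :
    LeaveIsCycleType (develop translations baseBlock) [12, 12] :=
  leaveIsCycleType_of_succ cyclePoint cyclePoint_bijective cyclePoint_add_one
    leaveAdj_develop_baseBlock

/-- There is a 2-(24,4,1) packing with 42 blocks whose leave is a vertex-disjoint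
union of cycles of lengths [12, 12], covering all 24 points. -/
theorem exists_max_packing_with_leave_type :
    ∃ B : Finset (Finset (Fin 24)), IsPacking B ∧ B.card = 42 ∧
      LeaveIsCycleType B [12, 12] :=
  ⟨develop translations baseBlock, isPacking_develop_baseBlock, card_develop_baseBlock,
    leaveIsCycleType_develop_baseBlock⟩
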